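/- For all c > 0 and ε > 0 there exists δ > 0 such that for all sufficiently large N, the following holds: for every η with 0 ≤ η ≤ c/√N, every pair of Borel sets A, B ⊆ ℝ^N with γ^N(A) ≥ 2^{-δN} and γ^N(B) ≥ 2^{-δN}, and every s ∈ ℝ, one has (1/2)·( e^s · Ξ_{-η}(A × B) + e^{-s} · Ξ_{η}(A × B) ) ≥ (1 - ε)·γ^N(A)·γ^N(B). -/

import Mathlib

open MeasureTheory ProbabilityTheory

/-- The standard Gaussian measure `γ^N` on `ℝ^N`. -/
noncomputable def stdGaussianPi (N : ℕ) : Measure (Fin N → ℝ) :=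
  Measure.pi fun _ => gaussianReal 0 1

/-- The measure `Ξ_η` on `ℝ^N × ℝ^N`: `x, z` independent standard Gaussians and
`y = η x + √(1-η²) z`. -/
noncomputable def Xi (N : ℕ) (η : ℝ) : Measure ((Fin N → ℝ) × (Fin N → ℝ)) :=
  Measure.map (fun xz => (xz.1, η • xz.1 + Real.sqrt (1 - η ^ 2) • xz.2))
    ((stdGaussianPi N).prod (stdGaussianPi N))

open Module
open scoped RealInnerProductSpace ENNReal

/-!
Write `D = 1 - η²`. The symmetrized density of `Ξ_{±η}` with respect to `γ ⊗ γ` is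
`½ (eˢ M_{-η} + e⁻ˢ M_η) (x, y) = D^{-N/2} exp (-η² (‖x‖² + ‖y‖²) / (2D)) cosh (t ⟪x, y⟫ - s)` with
`t = η / D`. Up to exponentially small sets `x` and `y` lie on the shell `‖·‖² ≈ N`, where the
weight in front of `cosh` is about `exp (-t² N / 2)`. So it is enough that, for all but
exponentially few `x`, the average of `cosh (t ⟪x, ·⟫ - s)` over `B` is at least
`(1 - ε) exp (t² N / 2)`.

If the exceptional set of `x` were not exponentially small, one could pick greedily `k ≍ N` points
`x_j` in it, each nearly orthogonal to the span of the previous ones. For small `l > 0` the function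
`exp (-l ∑ cosh (t ⟪x_j, ·⟫ - s))` then nearly factorizes under `γ`, so its integral is at most
about `exp (-l k exp (t² N / 2))`. By Jensen's inequality its average over `B` is larger than this
by a factor exponential in `k`, so `γ(B)` is exponentially small.
-/

lemma inv_sqrt_one_sub_le_exp {u : ℝ} (hu : u < 1) :
    (√(1 - u))⁻¹ ≤ Real.exp (u / (1 - u) / 2) := by
  have hpos : 0 < 1 - u := by linarith
  rw [Real.exp_half, ← Real.sqrt_inv]
  refine Real.sqrt_le_sqrt ?_
  calc (1 - u)⁻¹ = u / (1 - u) + 1 := by field_simp; ring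
    _ ≤ Real.exp (u / (1 - u)) := Real.add_one_le_exp _

lemma exp_half_le_inv_sqrt_one_sub {u : ℝ} (hu : u < 1) :
    Real.exp (u / 2) ≤ (√(1 - u))⁻¹ := by
  have hpos : 0 < 1 - u := by linarith
  rw [Real.exp_half, ← Real.sqrt_inv]
  refine Real.sqrt_le_sqrt ?_
  rw [← neg_neg u, Real.exp_neg, neg_neg]
  exact inv_anti₀ hpos (Real.one_sub_le_exp_neg u)

lemma exp_neg_le_one_sub_add_sq_div_two {x : ℝ} (hx : 0 ≤ x) :
    Real.exp (-x) ≤ 1 - x + x ^ 2 / 2 := by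
  have hquad : 0 < 1 + x + x ^ 2 / 2 := by positivity
  rw [Real.exp_neg]
  refine (inv_anti₀ hquad (Real.quadratic_le_exp_of_nonneg hx)).trans ?_
  rw [inv_le_iff_one_le_mul₀ hquad]
  nlinarith [pow_nonneg hx 4]

lemma div_one_sub_sq_sq_mul_le {c η n : ℝ} (hη : η ^ 2 ≤ 1 / 2) (hηn : η ^ 2 * n ≤ c ^ 2) :
    (η / (1 - η ^ 2)) ^ 2 * n ≤ (2 * c) ^ 2 := by
  have hD : 1 / 4 ≤ (1 - η ^ 2) ^ 2 := by nlinarith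
  rw [div_pow, div_mul_eq_mul_div, div_le_iff₀ (by positivity)]
  nlinarith [sq_nonneg c]

lemma sq_mul_le_sq_of_abs_le_div_sqrt {c n η : ℝ} (hn : 0 < n) (hη : |η| ≤ c / √n) :
    η ^ 2 * n ≤ c ^ 2 := by
  rw [le_div_iff₀ (Real.sqrt_pos.2 hn)] at hη
  calc η ^ 2 * n = (|η| * √n) ^ 2 := by rw [mul_pow, sq_abs, Real.sq_sqrt hn.le]
    _ ≤ c ^ 2 := by gcongr

lemma eventually_mul_exp_neg_lt_mul_two_rpow {β δ κ : ℝ} (hδβ : δ * Real.log 2 < β) (hκ : 0 < κ)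
    (K : ℝ) : ∀ᶠ N : ℕ in Filter.atTop, K * Real.exp (-(β * N)) < κ * 2 ^ (-δ * (N : ℝ)) := by
  have hlim : Filter.Tendsto (fun N : ℕ ↦ K * Real.exp (-((β - δ * Real.log 2) * N)))
      Filter.atTop (nhds (K * 0)) :=
    ((Real.tendsto_exp_neg_atTop_nhds_zero.comp (tendsto_natCast_atTop_atTop.const_mul_atTop
      (sub_pos.2 hδβ))).const_mul K)
  rw [mul_zero] at hlim
  filter_upwards [hlim.eventually_lt_const hκ] with N hN
  calc K * Real.exp (-(β * N))
    _ = K * Real.exp (-((β - δ * Real.log 2) * N)) * 2 ^ (-δ * (N : ℝ)) := by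
        rw [Real.rpow_def_of_pos two_pos, mul_assoc, ← Real.exp_add]
        ring_nf
    _ < κ * 2 ^ (-δ * (N : ℝ)) := by gcongr

lemma measure_univ_le_ofReal_exp_mul_lintegral {α : Type*} [MeasurableSpace α] {ν : Measure α}
    [IsFiniteMeasure ν] {f : α → ℝ} (hf : Measurable f) (hf0 : ∀ a, 0 ≤ f a) {u : ℝ} (hu : 0 ≤ u)
    (h : ∫⁻ a, ENNReal.ofReal (f a) ∂ν ≤ ENNReal.ofReal u * ν Set.univ) :
    ν Set.univ ≤ ENNReal.ofReal (Real.exp u) * ∫⁻ a, ENNReal.ofReal (Real.exp (-f a)) ∂ν := by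
  have htangent (a : α) : ENNReal.ofReal (1 + u)
      ≤ ENNReal.ofReal (Real.exp u) * ENNReal.ofReal (Real.exp (-f a)) + ENNReal.ofReal (f a) := by
    rw [← ENNReal.ofReal_mul (Real.exp_nonneg u), ← Real.exp_add,
      ← ENNReal.ofReal_add (Real.exp_nonneg _) (hf0 a)]
    exact ENNReal.ofReal_le_ofReal (by linarith [Real.add_one_le_exp (u + -f a)])
  refine (ENNReal.add_le_add_iff_right (a := ENNReal.ofReal u * ν Set.univ) (by finiteness)).1 ?_
  calc ν Set.univ + ENNReal.ofReal u * ν Set.univ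
    _ = ∫⁻ _, ENNReal.ofReal (1 + u) ∂ν := by
        rw [lintegral_const, ENNReal.ofReal_add zero_le_one hu, ENNReal.ofReal_one, add_mul,
          one_mul]
    _ ≤ ∫⁻ a, (ENNReal.ofReal (Real.exp u) * ENNReal.ofReal (Real.exp (-f a))
          + ENNReal.ofReal (f a)) ∂ν := lintegral_mono htangent
    _ = ENNReal.ofReal (Real.exp u) * ∫⁻ a, ENNReal.ofReal (Real.exp (-f a)) ∂ν
          + ∫⁻ a, ENNReal.ofReal (f a) ∂ν := by
        rw [lintegral_add_left (by fun_prop), lintegral_const_mul _ (by fun_prop)]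
    _ ≤ ENNReal.ofReal (Real.exp u) * ∫⁻ a, ENNReal.ofReal (Real.exp (-f a)) ∂ν
          + ENNReal.ofReal u * ν Set.univ := by gcongr

lemma one_sub_mul_measureReal_le_measureReal_inter {X : Type*} [MeasurableSpace X] {μ : Measure X}
    [IsFiniteMeasure μ] {ε : ℝ} {A S : Set X} (hS : μ.real Sᶜ ≤ ε * μ.real A) :
    (1 - ε) * μ.real A ≤ μ.real (A ∩ S) := by
  have hA : μ.real A ≤ μ.real (A ∩ S) + μ.real Sᶜ :=
    (measureReal_mono fun x hx ↦ (em (x ∈ S)).imp (.intro hx) id).trans (measureReal_union_le _ _)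
  linarith

lemma pi_withDensity_eq_withDensity_prod {ι : Type*} [Fintype ι] {X : ι → Type*}
    [∀ i, MeasurableSpace (X i)] (μ : ∀ i, Measure (X i)) [∀ i, IsProbabilityMeasure (μ i)]
    {f : ∀ i, X i → ℝ≥0∞} (hf : ∀ i, Measurable (f i))
    [∀ i, SigmaFinite ((μ i).withDensity (f i))] :
    Measure.pi (fun i ↦ (μ i).withDensity (f i))
      = (Measure.pi μ).withDensity fun x ↦ ∏ i, f i (x i) := by
  classical
  refine Measure.pi_eq fun S hS ↦ ?_
  have hfS (i : ι) : Measurable ((S i).indicator (f i)) := (hf i).indicator (hS i)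
  have hprod (x : ∀ i, X i) : (Set.univ.pi S).indicator (fun x ↦ ∏ i, f i (x i)) x
      = ∏ i, (S i).indicator (f i) (x i) := by
    simp only [Set.indicator_apply, Set.mem_univ_pi]
    split_ifs with hx
    · exact Finset.prod_congr rfl fun i _ ↦ (if_pos (hx i)).symm
    · obtain ⟨i, hi⟩ := not_forall.1 hx
      exact (Finset.prod_eq_zero (Finset.mem_univ i) (if_neg hi)).symm
  calc (Measure.pi μ).withDensity (fun x ↦ ∏ i, f i (x i)) (Set.univ.pi S)
    _ = ∫⁻ x, ∏ i, (S i).indicator (f i) (x i) ∂Measure.pi μ := by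
        rw [withDensity_apply _ (.univ_pi hS), ← lintegral_indicator (.univ_pi hS),
          lintegral_congr hprod]
    _ = ∏ i, ∫⁻ x, (S i).indicator (f i) (x i) ∂Measure.pi μ :=
        lintegral_prod_eq_prod_lintegral_of_indepFun Finset.univ _
          (iIndepFun_pi fun i ↦ (hfS i).aemeasurable) fun i ↦ (hfS i).comp (measurable_pi_apply i)
    _ = ∏ i, (μ i).withDensity (f i) (S i) := Finset.prod_congr rfl fun i _ ↦ by
        rw [(measurePreserving_eval μ i).lintegral_comp (hfS i), lintegral_indicator (hS i),
          withDensity_apply _ (hS i)]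

lemma map_prodMk_eq_withDensity {X Y Z : Type*} [MeasurableSpace X] [MeasurableSpace Y]
    [MeasurableSpace Z] {μ : Measure X} {ν : Measure Z} {ρ : Measure Y} [SFinite ν]
    [SFinite ρ] {g : X → Z → Y} (hg : Measurable fun p : X × Z ↦ g p.1 p.2) {k : X → Y → ℝ≥0∞}
    (hk : Measurable fun p : X × Y ↦ k p.1 p.2)
    (hmap : ∀ x, ν.map (g x) = ρ.withDensity (k x)) :
    (μ.prod ν).map (fun p ↦ (p.1, g p.1 p.2)) = (μ.prod ρ).withDensity fun p ↦ k p.1 p.2 := by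
  have hgraph : Measurable fun p : X × Z ↦ (p.1, g p.1 p.2) := measurable_fst.prodMk hg
  ext S hS
  have hSx (x : X) : MeasurableSet (Prod.mk x ⁻¹' S) := measurable_prodMk_left hS
  rw [Measure.map_apply hgraph hS, Measure.prod_apply (hgraph hS), withDensity_apply _ hS,
    ← lintegral_indicator hS, lintegral_prod _ (hk.indicator hS).aemeasurable]
  refine lintegral_congr fun x ↦ ?_
  calc ν (Prod.mk x ⁻¹' ((fun p ↦ (p.1, g p.1 p.2)) ⁻¹' S))
    _ = ν.map (g x) (Prod.mk x ⁻¹' S) :=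
        (Measure.map_apply (hg.comp measurable_prodMk_left) (hSx x)).symm
    _ = ∫⁻ y, S.indicator (fun p ↦ k p.1 p.2) (x, y) ∂ρ := by
        rw [hmap, withDensity_apply _ (hSx x), ← lintegral_indicator (hSx x)]
        rfl

/-! ### One-dimensional Gaussian integrals -/

lemma mgf_sq_gaussianReal {θ : ℝ} (hθ : θ < 1 / 2) :
    mgf (fun g ↦ g ^ 2) (gaussianReal 0 1) θ = (√(1 - 2 * θ))⁻¹ := by
  have hexp (g : ℝ) : gaussianPDFReal 0 1 g • Real.exp (θ * g ^ 2)
      = (√(2 * Real.pi))⁻¹ * Real.exp (-(1 / 2 - θ) * g ^ 2) := by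
    simp only [gaussianPDFReal, NNReal.coe_one, mul_one, sub_zero, smul_eq_mul, mul_assoc,
      ← Real.exp_add]
    ring_nf
  rw [mgf, integral_gaussianReal_eq_integral_smul one_ne_zero]
  simp_rw [hexp]
  rw [integral_const_mul, integral_gaussian, ← Real.sqrt_inv, ← Real.sqrt_inv,
    ← Real.sqrt_mul (by positivity)]
  congr 1
  have : 1 / 2 - θ ≠ 0 := by linarith
  have : 1 - 2 * θ ≠ 0 := by linarith
  field_simp

lemma gaussianReal_map_const_add_const_mul (m a : ℝ) :
    (gaussianReal 0 1).map (fun z ↦ m + a * z) = gaussianReal m (.mk (a ^ 2) (sq_nonneg a)) := by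
  have hcomp : (fun z ↦ m + a * z) = (m + ·) ∘ (a * ·) := rfl
  rw [hcomp, ← Measure.map_map (by fun_prop) (by fun_prop), gaussianReal_map_const_mul,
    gaussianReal_map_const_add, mul_zero, zero_add, mul_one]

lemma integrable_cosh_mul_gaussianReal (a m : ℝ) (v : NNReal) :
    Integrable (fun g ↦ Real.cosh (a * g)) (gaussianReal m v) := by
  simp_rw [Real.cosh_eq, ← neg_mul]
  exact ((integrable_exp_mul_gaussianReal a).add (integrable_exp_mul_gaussianReal (-a))).div_const 2

lemma integral_cosh_mul_gaussianReal (a m : ℝ) (v : NNReal) :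
    ∫ g, Real.cosh (a * g) ∂gaussianReal m v = Real.cosh (a * m) * Real.exp (v * a ^ 2 / 2) := by
  have hmgf (b : ℝ) : ∫ g, Real.exp (b * g) ∂gaussianReal m v = Real.exp (m * b + v * b ^ 2 / 2) :=
    congrFun (mgf_id_gaussianReal (μ := m) (v := v)) b
  simp_rw [Real.cosh_eq, ← neg_mul]
  rw [integral_div, integral_add (integrable_exp_mul_gaussianReal a)
    (integrable_exp_mul_gaussianReal (-a)), hmgf, hmgf, Real.exp_add, Real.exp_add]
  ring_nf

lemma integrable_cosh_sq_gaussianReal (m : ℝ) (v : NNReal) :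
    Integrable (fun g ↦ Real.cosh g ^ 2) (gaussianReal m v) := by
  have hsq (g : ℝ) : Real.cosh g ^ 2 = (Real.cosh (2 * g) + 1) / 2 := by
    linarith [Real.cosh_two_mul g, Real.cosh_sq g]
  simp_rw [hsq]
  exact ((integrable_cosh_mul_gaussianReal 2 m v).add (integrable_const 1)).div_const 2

lemma integral_cosh_sq_gaussianReal_le (m : ℝ) (v : NNReal) :
    ∫ g, Real.cosh g ^ 2 ∂gaussianReal m v ≤ Real.cosh m ^ 2 * Real.exp (2 * v) := by
  have hsq (g : ℝ) : Real.cosh g ^ 2 = (Real.cosh (2 * g) + 1) / 2 := by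
    linarith [Real.cosh_two_mul g, Real.cosh_sq g]
  have hexp : 1 ≤ Real.exp (2 * v) := Real.one_le_exp (by positivity)
  simp_rw [hsq]
  rw [integral_div, integral_add (integrable_cosh_mul_gaussianReal 2 m v) (integrable_const 1),
    integral_cosh_mul_gaussianReal, integral_const, probReal_univ, one_smul,
    show (v : ℝ) * 2 ^ 2 / 2 = 2 * v by ring]
  linarith

lemma integral_exp_neg_mul_cosh_le {l : ℝ} (hl : 0 ≤ l) (m : ℝ) (v : NNReal) :
    ∫ g, Real.exp (-(l * Real.cosh g)) ∂gaussianReal m v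
      ≤ Real.exp (-(l * Real.exp (v / 2)) + l ^ 2 * Real.exp (2 * v) / 2) := by
  -- Replacing `l` by `l / cosh m` makes the bound independent of `m`.
  set l' := l / Real.cosh m
  have : 0 < Real.cosh m := Real.cosh_pos m
  have hl' : 0 ≤ l' := by positivity
  have hmean : ∫ g, Real.cosh g ∂gaussianReal m v = Real.cosh m * Real.exp (v / 2) := by
    simpa using integral_cosh_mul_gaussianReal 1 m v
  have hint : Integrable Real.cosh (gaussianReal m v) := by
    simpa using integrable_cosh_mul_gaussianReal 1 m v
  have hint' : Integrable (fun g ↦ 1 - l' * Real.cosh g) (gaussianReal m v) :=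
    (integrable_const 1).sub (hint.const_mul l')
  have hintSq : Integrable (fun g ↦ l' ^ 2 / 2 * Real.cosh g ^ 2) (gaussianReal m v) :=
    (integrable_cosh_sq_gaussianReal m v).const_mul _
  calc ∫ g, Real.exp (-(l * Real.cosh g)) ∂gaussianReal m v
    _ ≤ ∫ g, (1 - l' * Real.cosh g + l' ^ 2 / 2 * Real.cosh g ^ 2) ∂gaussianReal m v := by
        refine integral_mono_of_nonneg (ae_of_all _ fun g ↦ (Real.exp_pos _).le)
          (hint'.add hintSq) (ae_of_all _ fun g ↦ ?_)
        have hg : 0 ≤ l' * Real.cosh g := mul_nonneg hl' (Real.cosh_pos g).le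
        have hle : l' * Real.cosh g ≤ l * Real.cosh g := by
          gcongr
          exact div_le_self hl (Real.one_le_cosh m)
        calc Real.exp (-(l * Real.cosh g)) ≤ Real.exp (-(l' * Real.cosh g)) := by gcongr
          _ ≤ _ := exp_neg_le_one_sub_add_sq_div_two hg
          _ = _ := by ring
    _ = 1 - l' * (Real.cosh m * Real.exp (v / 2))
          + l' ^ 2 / 2 * ∫ g, Real.cosh g ^ 2 ∂gaussianReal m v := by
        rw [integral_add hint' hintSq, integral_sub (integrable_const 1) (hint.const_mul l'),
          integral_const_mul, integral_const_mul, hmean, integral_const, probReal_univ, one_smul]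
    _ ≤ 1 - l' * (Real.cosh m * Real.exp (v / 2))
          + l' ^ 2 / 2 * (Real.cosh m ^ 2 * Real.exp (2 * v)) := by
        gcongr
        exact integral_cosh_sq_gaussianReal_le m v
    _ = -(l * Real.exp (v / 2)) + l ^ 2 * Real.exp (2 * v) / 2 + 1 := by
        simp only [l']
        field_simp
        ring
    _ ≤ _ := Real.add_one_le_exp _

lemma lintegral_exp_neg_mul_cosh_le {l : ℝ} (hl : 0 ≤ l) (t s m : ℝ) (v : NNReal) :
    ∫⁻ g, ENNReal.ofReal (Real.exp (-(l * Real.cosh (t * g - s)))) ∂gaussianReal m v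
      ≤ ENNReal.ofReal
        (Real.exp (-(l * Real.exp (t ^ 2 * v / 2)) + l ^ 2 * Real.exp (2 * (t ^ 2 * v)) / 2)) := by
  have hmap : (gaussianReal m v).map (fun g ↦ t * g - s)
      = gaussianReal (t * m - s) (.mk (t ^ 2) (sq_nonneg t) * v) := by
    have hcomp : (fun g ↦ t * g - s) = (· - s) ∘ (t * ·) := rfl
    rw [hcomp, ← Measure.map_map (by fun_prop) (by fun_prop), gaussianReal_map_const_mul,
      gaussianReal_map_sub_const]
  have hint : Integrable (fun g ↦ Real.exp (-(l * Real.cosh g)))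
      (gaussianReal (t * m - s) (.mk (t ^ 2) (sq_nonneg t) * v)) := by
    refine Integrable.of_bound (by fun_prop) 1 (ae_of_all _ fun g ↦ ?_)
    rw [Real.norm_of_nonneg (Real.exp_nonneg _), Real.exp_le_one_iff, neg_nonpos]
    exact mul_nonneg hl (Real.cosh_pos g).le
  rw [← lintegral_map (f := fun g ↦ ENNReal.ofReal (Real.exp (-(l * Real.cosh g))))
    (by fun_prop) (by fun_prop), hmap, ← ofReal_integral_eq_lintegral_ofReal hint
    (ae_of_all _ fun g ↦ Real.exp_nonneg _)]
  exact ENNReal.ofReal_le_ofReal (integral_exp_neg_mul_cosh_le hl _ _)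

lemma lintegral_exp_neg_mul_cosh_le_of_mem_Icc {n c ε τ t l : ℝ} (hτ : 0 ≤ τ) (hτ1 : τ ≤ 1)
    (hτε : τ * c ^ 2 ≤ ε / 2) (ht : t ^ 2 * n ≤ c ^ 2) (hl : 0 ≤ l) {v : NNReal}
    (hv : (v : ℝ) ∈ Set.Icc ((1 - 2 * τ) * n) ((1 + τ) * n)) (s m : ℝ) :
    ∫⁻ g, ENNReal.ofReal (Real.exp (-(l * Real.cosh (t * g - s)))) ∂gaussianReal m v
      ≤ ENNReal.ofReal (Real.exp (-(l * ((1 - ε / 2) * Real.exp (t ^ 2 * n / 2))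
          - l ^ 2 * Real.exp (4 * c ^ 2) / 2))) := by
  have htv : (1 - 2 * τ) * (t ^ 2 * n) ≤ t ^ 2 * v := by nlinarith [sq_nonneg t, hv.1]
  have htv' : t ^ 2 * v ≤ 2 * c ^ 2 := by nlinarith [sq_nonneg t, hv.2, v.coe_nonneg]
  have hmean : (1 - ε / 2) * Real.exp (t ^ 2 * n / 2) ≤ Real.exp (t ^ 2 * v / 2) := by
    calc (1 - ε / 2) * Real.exp (t ^ 2 * n / 2)
      _ ≤ Real.exp (-(ε / 2)) * Real.exp (t ^ 2 * n / 2) := by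
          gcongr
          exact Real.one_sub_le_exp_neg _
      _ ≤ Real.exp (t ^ 2 * v / 2) := by
          rw [← Real.exp_add, Real.exp_le_exp]
          nlinarith
  have hsecond : Real.exp (2 * (t ^ 2 * v)) ≤ Real.exp (4 * c ^ 2) :=
    Real.exp_le_exp.2 (by linarith)
  refine (lintegral_exp_neg_mul_cosh_le hl t s m v).trans (ENNReal.ofReal_le_ofReal ?_)
  rw [Real.exp_le_exp, neg_sub', neg_mul_eq_neg_mul]
  have := mul_le_mul_of_nonneg_left hmean hl
  have := mul_le_mul_of_nonneg_left hsecond (sq_nonneg l)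
  linarith

/-! ### Concentration and orthogonal projections of the standard Gaussian measure -/

section

variable {E : Type*} [NormedAddCommGroup E] [InnerProductSpace ℝ E] [FiniteDimensional ℝ E]
  [MeasurableSpace E] [BorelSpace E]

lemma mgf_norm_sq_stdGaussian {θ : ℝ} (hθ : θ < 1 / 2) :
    mgf (fun x : E ↦ ‖x‖ ^ 2) (stdGaussian E) θ = (√(1 - 2 * θ))⁻¹ ^ finrank ℝ E := by
  have hnorm (x : Fin (finrank ℝ E) → ℝ) :
      ‖∑ i, x i • stdOrthonormalBasis ℝ E i‖ ^ 2 = ∑ i, x i ^ 2 := by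
    simp_rw [← (stdOrthonormalBasis ℝ E).sum_sq_inner_right,
      (stdOrthonormalBasis ℝ E).orthonormal.inner_right_fintype]
  rw [mgf, stdGaussian, integral_map (Measurable.aemeasurable (by fun_prop)) (by fun_prop)]
  simp_rw [hnorm, Finset.mul_sum, Real.exp_sum]
  rw [integral_fintype_prod_eq_prod (fun _ g ↦ Real.exp (θ * g ^ 2))]
  simp [← mgf_sq_gaussianReal hθ, mgf]

lemma integrable_exp_mul_norm_sq_stdGaussian {θ : ℝ} (hθ : θ < 1 / 2) :
    Integrable (fun x : E ↦ Real.exp (θ * ‖x‖ ^ 2)) (stdGaussian E) := by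
  refine mgf_pos_iff.mp ?_
  have : 0 < 1 - 2 * θ := by linarith
  rw [mgf_norm_sq_stdGaussian hθ]
  positivity

lemma mgf_norm_sq_stdGaussian_le {θ : ℝ} (hθ : θ < 1 / 2) :
    mgf (fun x : E ↦ ‖x‖ ^ 2) (stdGaussian E) θ
      ≤ Real.exp (finrank ℝ E * (θ / (1 - 2 * θ))) := by
  rw [mgf_norm_sq_stdGaussian hθ, Real.exp_nat_mul]
  refine pow_le_pow_left₀ (by positivity) ?_ _
  calc (√(1 - 2 * θ))⁻¹ ≤ Real.exp (2 * θ / (1 - 2 * θ) / 2) :=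
        inv_sqrt_one_sub_le_exp (by linarith)
    _ = Real.exp (θ / (1 - 2 * θ)) := by
        congr 1
        ring

variable (E) in
/-- The spherical shell on which `‖x‖ ^ 2` is within a factor `1 ± τ` of `finrank ℝ E`, its mean
under the standard Gaussian measure. -/
def normShell (τ : ℝ) : Set E :=
  {x | ‖x‖ ^ 2 ∈ Set.Icc ((1 - τ) * finrank ℝ E) ((1 + τ) * finrank ℝ E)}

lemma stdGaussian_real_le_norm_sq_le {τ : ℝ} (hτ : 0 ≤ τ) (hτ1 : τ ≤ 1) :
    (stdGaussian E).real {x | (1 + τ) * finrank ℝ E ≤ ‖x‖ ^ 2}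
      ≤ Real.exp (-(τ ^ 2 / 16 * finrank ℝ E)) := by
  have hθ : τ / 8 < 1 / 2 := by linarith
  have hθ' : τ / 8 / (1 - 2 * (τ / 8)) ≤ τ / 8 * (1 + τ / 2) := by
    rw [div_le_iff₀ (by linarith)]
    nlinarith [mul_nonneg hτ (sub_nonneg.2 hτ1), sq_nonneg τ]
  calc (stdGaussian E).real {x | (1 + τ) * finrank ℝ E ≤ ‖x‖ ^ 2}
    _ ≤ Real.exp (-(τ / 8) * ((1 + τ) * finrank ℝ E))
          * mgf (‖·‖ ^ 2) (stdGaussian E) (τ / 8) :=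
        measure_ge_le_exp_mul_mgf _ (by positivity) (integrable_exp_mul_norm_sq_stdGaussian hθ)
    _ ≤ Real.exp (-(τ / 8) * ((1 + τ) * finrank ℝ E))
          * Real.exp (finrank ℝ E * (τ / 8 * (1 + τ / 2))) := by
        gcongr
        exact (mgf_norm_sq_stdGaussian_le hθ).trans (by gcongr)
    _ = Real.exp (-(τ ^ 2 / 16 * finrank ℝ E)) := by
        rw [← Real.exp_add]
        ring_nf

lemma stdGaussian_real_norm_sq_le_le {τ : ℝ} (hτ : 0 ≤ τ) :
    (stdGaussian E).real {x | ‖x‖ ^ 2 ≤ (1 - τ) * finrank ℝ E}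
      ≤ Real.exp (-(τ ^ 2 / 16 * finrank ℝ E)) := by
  have hθ : -(τ / 8) < 1 / 2 := by linarith
  have hθ' : -(τ / 8) / (1 - 2 * -(τ / 8)) ≤ -(τ / 8) * (1 - τ / 2) := by
    rw [div_le_iff₀ (by linarith)]
    nlinarith [pow_nonneg hτ 3]
  calc (stdGaussian E).real {x | ‖x‖ ^ 2 ≤ (1 - τ) * finrank ℝ E}
    _ ≤ Real.exp (-(-(τ / 8)) * ((1 - τ) * finrank ℝ E))
          * mgf (‖·‖ ^ 2) (stdGaussian E) (-(τ / 8)) :=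
        measure_le_le_exp_mul_mgf _ (by linarith) (integrable_exp_mul_norm_sq_stdGaussian hθ)
    _ ≤ Real.exp (-(-(τ / 8)) * ((1 - τ) * finrank ℝ E))
          * Real.exp (finrank ℝ E * (-(τ / 8) * (1 - τ / 2))) := by
        gcongr
        exact (mgf_norm_sq_stdGaussian_le hθ).trans (by gcongr)
    _ = Real.exp (-(τ ^ 2 / 16 * finrank ℝ E)) := by
        rw [← Real.exp_add]
        ring_nf

lemma stdGaussian_real_compl_normShell_le {τ : ℝ} (hτ : 0 ≤ τ) (hτ1 : τ ≤ 1) :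
    (stdGaussian E).real (normShell E τ)ᶜ ≤ 2 * Real.exp (-(τ ^ 2 / 16 * finrank ℝ E)) := by
  have hsub : (normShell E τ)ᶜ ⊆ {x | (1 + τ) * finrank ℝ E ≤ ‖x‖ ^ 2}
      ∪ {x | ‖x‖ ^ 2 ≤ (1 - τ) * finrank ℝ E} := by
    intro x hx
    simp only [normShell, Set.mem_compl_iff, Set.mem_ofPred_eq, Set.mem_Icc, not_and_or,
      not_le] at hx
    exact hx.symm.imp le_of_lt le_of_lt
  calc (stdGaussian E).real (normShell E τ)ᶜ
    _ ≤ _ := measureReal_mono hsub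
    _ ≤ _ := measureReal_union_le _ _
    _ ≤ Real.exp (-(τ ^ 2 / 16 * finrank ℝ E)) + Real.exp (-(τ ^ 2 / 16 * finrank ℝ E)) :=
        add_le_add (stdGaussian_real_le_norm_sq_le hτ hτ1) (stdGaussian_real_norm_sq_le_le hτ)
    _ = 2 * Real.exp (-(τ ^ 2 / 16 * finrank ℝ E)) := (two_mul _).symm

lemma stdGaussian_map_orthogonalProjectionOnto (V : Submodule ℝ E) :
    (stdGaussian E).map V.orthogonalProjectionOnto = stdGaussian V := by
  refine Measure.ext_of_charFun ?_
  ext t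
  have hcharFun : charFun ((stdGaussian E).map V.orthogonalProjectionOnto) t
      = charFun (stdGaussian E) t := by
    rw [charFun_apply, integral_map (by fun_prop) (by fun_prop), charFun_apply]
    simp
  simp [hcharFun, charFun_stdGaussian]

lemma stdGaussian_real_le_norm_starProjection_sq_le (V : Submodule ℝ E) (r : ℝ) :
    (stdGaussian E).real {x | r ≤ ‖V.starProjection x‖ ^ 2}
      ≤ Real.exp (finrank ℝ V / 2 - r / 4) := by
  have hθ : (1 / 4 : ℝ) < 1 / 2 := by norm_num
  calc (stdGaussian E).real {x | r ≤ ‖V.starProjection x‖ ^ 2}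
    _ = (stdGaussian V).real {x | r ≤ ‖x‖ ^ 2} := by
        rw [← stdGaussian_map_orthogonalProjectionOnto, map_measureReal_apply (by fun_prop)
          (measurableSet_le (by fun_prop) (by fun_prop))]
        rfl
    _ ≤ Real.exp (-(1 / 4) * r) * mgf (‖·‖ ^ 2) (stdGaussian V) (1 / 4) :=
        measure_ge_le_exp_mul_mgf r (by norm_num) (integrable_exp_mul_norm_sq_stdGaussian hθ)
    _ ≤ Real.exp (-(1 / 4) * r) * Real.exp (finrank ℝ V * (1 / 4 / (1 - 2 * (1 / 4)))) := by
        gcongr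
        exact mgf_norm_sq_stdGaussian_le hθ
    _ = Real.exp (finrank ℝ V / 2 - r / 4) := by
        rw [← Real.exp_add]
        ring_nf

lemma exists_mem_norm_starProjection_sq_lt {τ : ℝ} {S : Set E}
    (hS : Real.exp (-(τ * finrank ℝ E / 8)) < (stdGaussian E).real S) {V : Submodule ℝ E}
    (hV : finrank ℝ V ≤ τ * finrank ℝ E / 4) :
    ∃ x ∈ S, ‖V.starProjection x‖ ^ 2 < τ * finrank ℝ E := by
  by_contra! hfar
  refine hS.not_ge ?_
  calc (stdGaussian E).real S
    _ ≤ (stdGaussian E).real {x | τ * finrank ℝ E ≤ ‖V.starProjection x‖ ^ 2} :=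
        measureReal_mono hfar
    _ ≤ Real.exp (finrank ℝ V / 2 - τ * finrank ℝ E / 4) :=
        stdGaussian_real_le_norm_starProjection_sq_le V _
    _ ≤ Real.exp (-(τ * finrank ℝ E / 8)) := Real.exp_le_exp.2 (by linarith)

omit [MeasurableSpace E] [BorelSpace E] in
lemma norm_starProjection_orthogonal_sq_mem_Icc {τ : ℝ} {x : E} (hx : x ∈ normShell E τ)
    {V : Submodule ℝ E} (hV : ‖V.starProjection x‖ ^ 2 ≤ τ * finrank ℝ E) :
    ‖Vᗮ.starProjection x‖ ^ 2 ∈ Set.Icc ((1 - 2 * τ) * finrank ℝ E) ((1 + τ) * finrank ℝ E) := by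
  obtain ⟨hl, hu⟩ := hx
  rw [V.norm_sq_eq_add_norm_sq_starProjection x] at hl hu
  exact ⟨by linarith, by linarith [sq_nonneg ‖V.starProjection x‖]⟩

lemma charFun_stdGaussian_map_starProjection (V : Submodule ℝ E) (t : E) :
    charFun ((stdGaussian E).map V.starProjection) t
      = charFun (stdGaussian E) (V.starProjection t) := by
  rw [charFun_apply, integral_map (by fun_prop) (by fun_prop), charFun_apply]
  simp_rw [Submodule.inner_starProjection_left_eq_right]

lemma stdGaussian_map_starProjection_conv_orthogonal (V : Submodule ℝ E) :
    (stdGaussian E).map V.starProjection ∗ (stdGaussian E).map Vᗮ.starProjection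
      = stdGaussian E := by
  refine Measure.ext_of_charFun ?_
  ext t
  rw [charFun_conv, charFun_stdGaussian_map_starProjection, charFun_stdGaussian_map_starProjection,
    charFun_stdGaussian, charFun_stdGaussian, charFun_stdGaussian, ← Complex.exp_add,
    ← Complex.ofReal_pow ‖t‖, V.norm_sq_eq_add_norm_sq_starProjection t]
  push_cast
  ring_nf

lemma stdGaussian_map_const_add_inner (m : ℝ) (q : E) :
    (stdGaussian E).map (fun y ↦ m + ⟪q, y⟫) = gaussianReal m (‖q‖₊ ^ 2) := by
  have hinner : (stdGaussian E).map (innerSL ℝ q) = gaussianReal 0 (‖q‖₊ ^ 2) := by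
    rw [IsGaussian.map_eq_gaussianReal, integral_strongDual_stdGaussian, variance_dual_stdGaussian]
    congr
    ext
    simp
  have hcomp : (fun y ↦ m + ⟪q, y⟫) = (m + ·) ∘ innerSL ℝ q := rfl
  rw [hcomp, ← Measure.map_map (by fun_prop) (by fun_prop), hinner, gaussianReal_map_const_add,
    zero_add]

/-! ### Averages of `cosh ⟪x, ·⟫` over large sets -/

-- Conditionally on its projection to `V`, the variable `⟪x, y⟫` is Gaussian with variance
-- `‖Vᗮ.starProjection x‖ ^ 2`.
lemma lintegral_mul_comp_inner_le (V : Submodule ℝ E) {w : E → ℝ≥0∞} (hw : Measurable w)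
    (hwV : ∀ y, w (V.starProjection y) = w y) {F : ℝ → ℝ≥0∞} (hF : Measurable F) {x : E} {ρ : ℝ≥0∞}
    (hρ : ∀ m, ∫⁻ g, F g ∂gaussianReal m (‖Vᗮ.starProjection x‖₊ ^ 2) ≤ ρ) :
    ∫⁻ y, w y * F ⟪x, y⟫ ∂stdGaussian E ≤ ρ * ∫⁻ y, w y ∂stdGaussian E := by
  have hwadd (y z : E) : w (V.starProjection y + Vᗮ.starProjection z) = w y := by
    rw [← hwV, map_add, V.starProjection_apply_eq_zero_iff.mpr (Vᗮ.starProjection_apply_mem z),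
      add_zero, hwV, hwV]
  have hinner (y z : E) : ⟪x, V.starProjection y + Vᗮ.starProjection z⟫
      = ⟪x, V.starProjection y⟫ + ⟪Vᗮ.starProjection x, z⟫ := by
    rw [inner_add_right, Submodule.inner_starProjection_left_eq_right]
  calc ∫⁻ y, w y * F ⟪x, y⟫ ∂stdGaussian E
    _ = ∫⁻ y, ∫⁻ z, w y * F (⟪x, V.starProjection y⟫ + ⟪Vᗮ.starProjection x, z⟫)
          ∂stdGaussian E ∂stdGaussian E := by
        nth_rw 1 [← stdGaussian_map_starProjection_conv_orthogonal V]
        rw [Measure.lintegral_conv (by fun_prop), lintegral_map (by fun_prop) (by fun_prop)]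
        refine lintegral_congr fun y ↦ ?_
        rw [lintegral_map (by fun_prop) (by fun_prop)]
        simp_rw [hwadd, hinner]
    _ = ∫⁻ y, w y * ∫⁻ g, F g ∂gaussianReal ⟪x, V.starProjection y⟫ (‖Vᗮ.starProjection x‖₊ ^ 2)
          ∂stdGaussian E := by
        refine lintegral_congr fun y ↦ ?_
        rw [lintegral_const_mul _ (by fun_prop), ← stdGaussian_map_const_add_inner,
          lintegral_map hF (by fun_prop)]
    _ ≤ ∫⁻ y, w y * ρ ∂stdGaussian E := by
        gcongr with y
        exact hρ _
    _ = ρ * ∫⁻ y, w y ∂stdGaussian E := by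
        rw [lintegral_mul_const _ hw, mul_comm]

-- The `x j` are chosen greedily, each against the span of the previous ones.
lemma exists_forall_mem_lintegral_prod_le {A : Set E} {F : E → ℝ → ℝ≥0∞}
    (hF : ∀ x, Measurable (F x)) {ρ : ℝ≥0∞} {k : ℕ}
    (hA : ∀ V : Submodule ℝ E, finrank ℝ V ≤ k →
      ∃ x ∈ A, ∀ m, ∫⁻ g, F x g ∂gaussianReal m (‖Vᗮ.starProjection x‖₊ ^ 2) ≤ ρ) :
    ∃ x : Fin k → E, (∀ j, x j ∈ A) ∧ ∫⁻ y, ∏ j, F (x j) ⟪x j, y⟫ ∂stdGaussian E ≤ ρ ^ k := by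
  induction k with
  | zero => exact ⟨Fin.elim0, Fin.rec0, by simp⟩
  | succ k ih =>
    obtain ⟨x, hxA, hx⟩ := ih fun V hV ↦ hA V (hV.trans k.le_succ)
    set V := Submodule.span ℝ (Set.range x)
    have hVk : finrank ℝ V ≤ k + 1 := (finrank_range_le_card x).trans (by simp)
    obtain ⟨x₀, hx₀A, hx₀⟩ := hA V hVk
    have hinner (j : Fin k) (y : E) : ⟪x j, V.starProjection y⟫ = ⟪x j, y⟫ := by
      rw [← Submodule.inner_starProjection_left_eq_right,
        V.starProjection_eq_self_iff.mpr (Submodule.subset_span ⟨j, rfl⟩)]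
    refine ⟨Fin.cons x₀ x, Fin.cases hx₀A hxA, ?_⟩
    simp_rw [Fin.prod_univ_succ, Fin.cons_zero, Fin.cons_succ, mul_comm (F x₀ _)]
    calc ∫⁻ y, (∏ j, F (x j) ⟪x j, y⟫) * F x₀ ⟪x₀, y⟫ ∂stdGaussian E
      _ ≤ ρ * ∫⁻ y, ∏ j, F (x j) ⟪x j, y⟫ ∂stdGaussian E :=
          lintegral_mul_comp_inner_le V (by fun_prop) (fun y ↦ by simp_rw [hinner]) (hF x₀) hx₀
      _ ≤ ρ * ρ ^ k := by gcongr
      _ = ρ ^ (k + 1) := (pow_succ' ρ k).symm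

-- Jensen's inequality bounds `∫ exp (-∑ j, f (x j) ⟪x j, ·⟫)` over `B` from below by the averages
-- in `hB`, while for greedily chosen `x j` the integral over all of `E` nearly factorizes.
lemma stdGaussian_le_of_forall_setLIntegral_le {A B : Set E} {f : E → ℝ → ℝ}
    (hf : ∀ x, Measurable (f x)) (hf0 : ∀ x g, 0 ≤ f x g) {k : ℕ} {u r : ℝ} (hr : 0 ≤ r)
    (hA : ∀ V : Submodule ℝ E, finrank ℝ V ≤ k → ∃ x ∈ A, ∀ m,
      ∫⁻ g, ENNReal.ofReal (Real.exp (-f x g)) ∂gaussianReal m (‖Vᗮ.starProjection x‖₊ ^ 2)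
        ≤ ENNReal.ofReal (Real.exp (-u)))
    (hB : ∀ x ∈ A, ∫⁻ y in B, ENNReal.ofReal (f x ⟪x, y⟫) ∂stdGaussian E
      ≤ ENNReal.ofReal r * stdGaussian E B) :
    stdGaussian E B ≤ ENNReal.ofReal (Real.exp (-(k * (u - r)))) := by
  obtain ⟨x, hxA, hx⟩ := exists_forall_mem_lintegral_prod_le
    (F := fun x g ↦ ENNReal.ofReal (Real.exp (-f x g))) (fun x ↦ by fun_prop) hA
  have hsum : ∫⁻ y in B, ENNReal.ofReal (∑ j, f (x j) ⟪x j, y⟫) ∂stdGaussian E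
      ≤ ENNReal.ofReal (k * r) * stdGaussian E B := by
    simp_rw [ENNReal.ofReal_sum_of_nonneg fun _ _ ↦ hf0 _ _]
    rw [lintegral_finsetSum _ fun j _ ↦ by fun_prop]
    refine (Finset.sum_le_sum fun j _ ↦ hB (x j) (hxA j)).trans_eq ?_
    rw [Finset.sum_const, Finset.card_univ, Fintype.card_fin, nsmul_eq_mul, ← mul_assoc,
      ENNReal.ofReal_mul k.cast_nonneg, ENNReal.ofReal_natCast]
  have hjensen := measure_univ_le_ofReal_exp_mul_lintegral (ν := (stdGaussian E).restrict B)
    (f := fun y ↦ ∑ j, f (x j) ⟪x j, y⟫) (u := k * r) (by fun_prop)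
    (fun y ↦ Finset.sum_nonneg fun j _ ↦ hf0 _ _) (by positivity)
    (by rwa [Measure.restrict_apply_univ])
  rw [Measure.restrict_apply_univ] at hjensen
  have hprod (y : E) : ENNReal.ofReal (Real.exp (-∑ j, f (x j) ⟪x j, y⟫))
      = ∏ j, ENNReal.ofReal (Real.exp (-f (x j) ⟪x j, y⟫)) := by
    rw [← Finset.sum_neg_distrib, Real.exp_sum,
      ENNReal.ofReal_prod_of_nonneg fun _ _ ↦ Real.exp_nonneg _]
  calc stdGaussian E B
    _ ≤ ENNReal.ofReal (Real.exp (k * r))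
          * ∫⁻ y in B, ENNReal.ofReal (Real.exp (-∑ j, f (x j) ⟪x j, y⟫)) ∂stdGaussian E := hjensen
    _ ≤ ENNReal.ofReal (Real.exp (k * r)) * ENNReal.ofReal (Real.exp (-u)) ^ k := by
        simp_rw [hprod]
        gcongr
        exact (setLIntegral_le_lintegral _ _).trans hx
    _ = ENNReal.ofReal (Real.exp (-(k * (u - r)))) := by
        rw [← ENNReal.ofReal_pow (Real.exp_nonneg _), ← Real.exp_nat_mul,
          ← ENNReal.ofReal_mul (Real.exp_nonneg _), ← Real.exp_add]
        ring_nf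

lemma stdGaussian_real_setLIntegral_cosh_le_le {c ε τ t s : ℝ} (hε : 0 ≤ ε) (hε1 : ε ≤ 1)
    (hτ : 0 ≤ τ) (hτ1 : τ ≤ 1) (hτε : τ * c ^ 2 ≤ ε / 2) (ht : t ^ 2 * finrank ℝ E ≤ c ^ 2) {k : ℕ}
    (hk : k ≤ τ * finrank ℝ E / 4) {B : Set E}
    (hB : Real.exp (-(k * (ε ^ 2 / (8 * Real.exp (4 * c ^ 2))))) < (stdGaussian E).real B) :
    (stdGaussian E).real {x ∈ normShell E τ | ∫⁻ y in B, ENNReal.ofReal (Real.cosh (t * ⟪x, y⟫ - s))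
        ∂stdGaussian E
          ≤ ENNReal.ofReal ((1 - ε) * Real.exp (t ^ 2 * finrank ℝ E / 2)) * stdGaussian E B}
      ≤ Real.exp (-(τ * finrank ℝ E / 8)) := by
  by_contra! hS
  set Q := Real.exp (4 * c ^ 2)
  set G := Real.exp (t ^ 2 * finrank ℝ E / 2)
  have hQ : 0 < Q := Real.exp_pos _
  have hG : 1 ≤ G := Real.one_le_exp (by positivity)
  -- The value of `l` that minimizes the exponent `l ^ 2 * Q / 2 - l * (ε / 2)`.
  set l := ε / (2 * Q)
  have hl : 0 ≤ l := by positivity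
  have : 0 ≤ 1 - ε := by linarith
  have hsmall := stdGaussian_le_of_forall_setLIntegral_le
    (f := fun _ g ↦ l * Real.cosh (t * g - s)) (k := k) (u := l * ((1 - ε / 2) * G) - l ^ 2 * Q / 2)
    (r := l * ((1 - ε) * G)) (B := B) (by fun_prop)
    (fun _ g ↦ mul_nonneg hl (Real.cosh_pos _).le) (by positivity)
    (fun V hV ↦ by
      obtain ⟨x, hxS, hxV⟩ := exists_mem_norm_starProjection_sq_lt hS (V := V)
        ((Nat.cast_le.2 hV).trans hk)
      have hvar := norm_starProjection_orthogonal_sq_mem_Icc hxS.1 hxV.le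
      rw [← coe_nnnorm, ← NNReal.coe_pow] at hvar
      exact ⟨x, hxS, lintegral_exp_neg_mul_cosh_le_of_mem_Icc hτ hτ1 hτε ht hl hvar s⟩)
    (fun x hx ↦ by
      simp_rw [ENNReal.ofReal_mul hl]
      rw [lintegral_const_mul _ (by fun_prop), mul_assoc]
      gcongr
      exact hx.2)
  have hexponent : ε ^ 2 / (8 * Q)
      ≤ l * ((1 - ε / 2) * G) - l ^ 2 * Q / 2 - l * ((1 - ε) * G) := by
    calc ε ^ 2 / (8 * Q) = l * (ε / 2) * 1 - l ^ 2 * Q / 2 := by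
          simp only [l]
          field_simp
          ring
      _ ≤ l * (ε / 2) * G - l ^ 2 * Q / 2 := by gcongr
      _ = _ := by ring
  refine hB.not_ge ((ENNReal.toReal_le_of_le_ofReal (Real.exp_nonneg _) hsmall).trans ?_)
  gcongr

lemma stdGaussian_real_compl_lt_setLIntegral_cosh_le {c ε τ t s : ℝ} (hε : 0 ≤ ε) (hε1 : ε ≤ 1)
    (hτ : 0 ≤ τ) (hτ1 : τ ≤ 1) (hτε : τ * c ^ 2 ≤ ε / 2) (ht : t ^ 2 * finrank ℝ E ≤ c ^ 2) {k : ℕ}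
    (hk : k ≤ τ * finrank ℝ E / 4) {B : Set E}
    (hB : Real.exp (-(k * (ε ^ 2 / (8 * Real.exp (4 * c ^ 2))))) < (stdGaussian E).real B) :
    (stdGaussian E).real {x ∈ normShell E τ |
        ENNReal.ofReal ((1 - ε) * Real.exp (t ^ 2 * finrank ℝ E / 2)) * stdGaussian E B
          < ∫⁻ y in B, ENNReal.ofReal (Real.cosh (t * ⟪x, y⟫ - s)) ∂stdGaussian E}ᶜ
      ≤ 3 * Real.exp (-(τ ^ 2 / 16 * finrank ℝ E)) := by
  have hshell := stdGaussian_real_compl_normShell_le (E := E) hτ hτ1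
  have hbad := stdGaussian_real_setLIntegral_cosh_le_le (s := s) hε hε1 hτ hτ1 hτε ht hk hB
  have hexp : Real.exp (-(τ * finrank ℝ E / 8)) ≤ Real.exp (-(τ ^ 2 / 16 * finrank ℝ E)) := by
    have : τ ^ 2 * finrank ℝ E ≤ τ * finrank ℝ E := by
      gcongr
      exact pow_le_of_le_one hτ hτ1 two_ne_zero
    have : 0 ≤ τ * finrank ℝ E := by positivity
    rw [Real.exp_le_exp]
    linarith
  refine (measureReal_mono fun x hx ↦ ?_).trans
    ((measureReal_union_le _ _).trans
      ((add_le_add hshell (hbad.trans hexp)).trans_eq (by ring)))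
  by_cases hxτ : x ∈ normShell E τ
  · exact .inr ⟨hxτ, not_lt.1 fun h ↦ hx ⟨hxτ, h⟩⟩
  · exact .inl hxτ

end

/-! ### The Mehler kernel -/

/-- The Mehler kernel on a Euclidean space: the density of `η • x + √(1 - η ^ 2) • z`, with `z` a
standard Gaussian vector, with respect to the standard Gaussian measure. -/
noncomputable def mehlerKernel {E : Type*} [NormedAddCommGroup E] [InnerProductSpace ℝ E]
    (η : ℝ) (x y : E) : ℝ :=
  (√(1 - η ^ 2))⁻¹ ^ finrank ℝ E
    * Real.exp ((2 * η * ⟪x, y⟫ - η ^ 2 * ‖x‖ ^ 2 - η ^ 2 * ‖y‖ ^ 2) / (2 * (1 - η ^ 2)))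

section Mehler

variable {E : Type*} [NormedAddCommGroup E] [InnerProductSpace ℝ E]

lemma mehlerKernel_nonneg (η : ℝ) (x y : E) : 0 ≤ mehlerKernel η x y := by
  unfold mehlerKernel
  positivity

lemma continuous_mehlerKernel (η : ℝ) : Continuous fun p : E × E ↦ mehlerKernel η p.1 p.2 := by
  unfold mehlerKernel
  fun_prop

lemma prod_mehlerKernel {ι : Type*} [Fintype ι] (η : ℝ) (x y : EuclideanSpace ℝ ι) :
    ∏ i, mehlerKernel η (x i) (y i) = mehlerKernel η x y := by
  simp only [mehlerKernel, Module.finrank_self, pow_one, finrank_euclideanSpace]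
  rw [Finset.prod_mul_distrib, ← Real.exp_sum, ← Finset.sum_div, Finset.sum_sub_distrib,
    Finset.sum_sub_distrib, ← Finset.mul_sum, ← Finset.mul_sum, ← Finset.mul_sum,
    EuclideanSpace.norm_sq_eq, EuclideanSpace.norm_sq_eq, PiLp.inner_apply, Finset.prod_const,
    Finset.card_univ]

lemma half_mul_exp_mul_mehlerKernel_neg_add {η : ℝ} (s : ℝ) (x y : E) :
    1 / 2 * (Real.exp s * mehlerKernel (-η) x y + Real.exp (-s) * mehlerKernel η x y)
      = (√(1 - η ^ 2))⁻¹ ^ finrank ℝ E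
        * Real.exp (-(η ^ 2 * (‖x‖ ^ 2 + ‖y‖ ^ 2) / (2 * (1 - η ^ 2))))
        * Real.cosh (η / (1 - η ^ 2) * ⟪x, y⟫ - s) := by
  have hsplit (ζ : ℝ) : Real.exp ((2 * ζ * ⟪x, y⟫ - η ^ 2 * ‖x‖ ^ 2 - η ^ 2 * ‖y‖ ^ 2)
        / (2 * (1 - η ^ 2)))
      = Real.exp (-(η ^ 2 * (‖x‖ ^ 2 + ‖y‖ ^ 2) / (2 * (1 - η ^ 2))))
        * Real.exp (ζ / (1 - η ^ 2) * ⟪x, y⟫) := by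
    rw [← Real.exp_add]
    generalize 1 - η ^ 2 = D
    ring_nf
  simp only [mehlerKernel, neg_sq, hsplit]
  rw [Real.cosh_eq, neg_sub, Real.exp_sub, Real.exp_sub, Real.exp_neg s, neg_div, neg_mul,
    Real.exp_neg (_ * _)]
  ring

lemma exp_le_inv_sqrt_pow_mul_exp_of_mem_normShell {c η τ : ℝ} (hη : η ^ 2 ≤ 1 / 2) (hτ : 0 ≤ τ)
    (hηc : η ^ 2 * finrank ℝ E ≤ c ^ 2) {x y : E} (hx : x ∈ normShell E τ)
    (hy : y ∈ normShell E τ) :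
    Real.exp (-(2 * τ * c ^ 2)) ≤ (√(1 - η ^ 2))⁻¹ ^ finrank ℝ E
      * Real.exp (-(η ^ 2 * (‖x‖ ^ 2 + ‖y‖ ^ 2) / (2 * (1 - η ^ 2))))
      * Real.exp ((η / (1 - η ^ 2)) ^ 2 * finrank ℝ E / 2) := by
  have hpow : Real.exp (finrank ℝ E * (η ^ 2 / 2)) ≤ (√(1 - η ^ 2))⁻¹ ^ finrank ℝ E := by
    rw [Real.exp_nat_mul]
    gcongr
    exact exp_half_le_inv_sqrt_one_sub (by linarith)
  set r := (1 - η ^ 2)⁻¹ with hr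
  have hr0 : 0 ≤ r := inv_nonneg.2 (by linarith)
  have hr2 : r ≤ 2 := inv_le_of_inv_le₀ two_pos (by linarith)
  have : 0 ≤ η ^ 2 * finrank ℝ E := by positivity
  have hxy : η ^ 2 * (‖x‖ ^ 2 + ‖y‖ ^ 2) * r ≤ η ^ 2 * (2 * ((1 + τ) * finrank ℝ E)) * r := by
    gcongr
    linarith [hx.2, hy.2]
  calc Real.exp (-(2 * τ * c ^ 2))
    _ ≤ Real.exp (η ^ 2 * finrank ℝ E * (1 - r) ^ 2 / 2 - τ * (η ^ 2 * finrank ℝ E) * r) := by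
        rw [Real.exp_le_exp]
        have : τ * (η ^ 2 * finrank ℝ E) * r ≤ τ * c ^ 2 * 2 := by gcongr
        have : 0 ≤ η ^ 2 * finrank ℝ E * (1 - r) ^ 2 / 2 := by positivity
        linarith
    _ ≤ Real.exp (finrank ℝ E * (η ^ 2 / 2))
          * Real.exp (-(η ^ 2 * (‖x‖ ^ 2 + ‖y‖ ^ 2) / (2 * (1 - η ^ 2))))
          * Real.exp ((η / (1 - η ^ 2)) ^ 2 * finrank ℝ E / 2) := by
        rw [← Real.exp_add, ← Real.exp_add, Real.exp_le_exp, div_mul_eq_div_div_swap,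
          div_eq_mul_inv _ (1 - η ^ 2), div_eq_mul_inv η, ← hr]
        linarith
    _ ≤ _ := by gcongr

variable [FiniteDimensional ℝ E] [MeasurableSpace E] [BorelSpace E]

lemma sq_mul_measure_le_setLIntegral_mehlerKernel {c ε η τ s : ℝ} (hε1 : ε ≤ 1) (hτ : 0 ≤ τ)
    (hτε : 2 * τ * c ^ 2 ≤ ε) (hη : η ^ 2 ≤ 1 / 2) (hηc : η ^ 2 * finrank ℝ E ≤ c ^ 2) {B : Set E}
    (hB : B ⊆ normShell E τ) {x : E} (hx : x ∈ normShell E τ)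
    (havg : ENNReal.ofReal ((1 - ε) * Real.exp ((η / (1 - η ^ 2)) ^ 2 * finrank ℝ E / 2))
        * stdGaussian E B
      ≤ ∫⁻ y in B, ENNReal.ofReal (Real.cosh (η / (1 - η ^ 2) * ⟪x, y⟫ - s)) ∂stdGaussian E) :
    ENNReal.ofReal ((1 - ε) ^ 2) * stdGaussian E B
      ≤ ∫⁻ y in B, ENNReal.ofReal (1 / 2 *
          (Real.exp s * mehlerKernel (-η) x y + Real.exp (-s) * mehlerKernel η x y))
          ∂stdGaussian E := by
  set t := η / (1 - η ^ 2)
  set G := Real.exp (t ^ 2 * finrank ℝ E / 2)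
  have hG : 0 < G := Real.exp_pos _
  have hε1' : 0 ≤ 1 - ε := by linarith
  calc ENNReal.ofReal ((1 - ε) ^ 2) * stdGaussian E B
    _ = ENNReal.ofReal ((1 - ε) / G) * (ENNReal.ofReal ((1 - ε) * G) * stdGaussian E B) := by
        rw [← mul_assoc, ← ENNReal.ofReal_mul (by positivity)]
        congr 2
        field_simp
    _ ≤ ENNReal.ofReal ((1 - ε) / G)
          * ∫⁻ y in B, ENNReal.ofReal (Real.cosh (t * ⟪x, y⟫ - s)) ∂stdGaussian E := by gcongr
    _ = ∫⁻ y in B, ENNReal.ofReal ((1 - ε) / G * Real.cosh (t * ⟪x, y⟫ - s)) ∂stdGaussian E := by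
        rw [← lintegral_const_mul' _ _ ENNReal.ofReal_ne_top]
        simp_rw [ENNReal.ofReal_mul (div_nonneg hε1' hG.le)]
    _ ≤ _ := by
        refine setLIntegral_mono (by unfold mehlerKernel; fun_prop) fun y hy ↦ ?_
        rw [half_mul_exp_mul_mehlerKernel_neg_add]
        gcongr
        rw [div_le_iff₀ hG]
        calc 1 - ε ≤ Real.exp (-(2 * τ * c ^ 2)) := by
              linarith [Real.one_sub_le_exp_neg (2 * τ * c ^ 2)]
          _ ≤ _ := exp_le_inv_sqrt_pow_mul_exp_of_mem_normShell hη hτ hηc hx (hB hy)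

theorem one_sub_pow_four_mul_le_setLIntegral_mehlerKernel {c ε η τ p s : ℝ} (hε : 0 ≤ ε)
    (hε1 : ε ≤ 1) (hτ : 0 ≤ τ) (hτ1 : τ ≤ 1) (hτε : τ * (2 * c) ^ 2 ≤ ε / 2) (hη : η ^ 2 ≤ 1 / 2)
    (hηc : η ^ 2 * finrank ℝ E ≤ c ^ 2) {k : ℕ} (hk : k ≤ τ * finrank ℝ E / 4) {A B : Set E}
    (hA : p ≤ (stdGaussian E).real A) (hB : p ≤ (stdGaussian E).real B)
    (hpτ : 3 * Real.exp (-(τ ^ 2 / 16 * finrank ℝ E)) ≤ ε * p)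
    (hpk : Real.exp (-(k * (ε ^ 2 / (8 * Real.exp (4 * (2 * c) ^ 2))))) < (1 - ε) * p) :
    ENNReal.ofReal ((1 - ε) ^ 4 * (stdGaussian E).real A * (stdGaussian E).real B)
      ≤ ∫⁻ x in A, ∫⁻ y in B, ENNReal.ofReal (1 / 2 *
          (Real.exp s * mehlerKernel (-η) x y + Real.exp (-s) * mehlerKernel η x y))
          ∂stdGaussian E ∂stdGaussian E := by
  set γ := stdGaussian E
  set t := η / (1 - η ^ 2)
  set K : E → E → ℝ≥0∞ := fun x y ↦ ENNReal.ofReal (1 / 2 *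
    (Real.exp s * mehlerKernel (-η) x y + Real.exp (-s) * mehlerKernel η x y))
  have hε1' : 0 ≤ 1 - ε := by linarith
  have hshell : γ.real (normShell E τ)ᶜ ≤ 2 * Real.exp (-(τ ^ 2 / 16 * finrank ℝ E)) :=
    stdGaussian_real_compl_normShell_le hτ hτ1
  set B' := B ∩ normShell E τ
  have hB' : (1 - ε) * γ.real B ≤ γ.real B' := one_sub_mul_measureReal_le_measureReal_inter (by
    nlinarith [Real.exp_nonneg (-(τ ^ 2 / 16 * finrank ℝ E))])
  set S := {x ∈ normShell E τ | ENNReal.ofReal ((1 - ε) * Real.exp (t ^ 2 * finrank ℝ E / 2)) * γ B'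
    < ∫⁻ y in B', ENNReal.ofReal (Real.cosh (t * ⟪x, y⟫ - s)) ∂γ}
  have hS : γ.real Sᶜ ≤ 3 * Real.exp (-(τ ^ 2 / 16 * finrank ℝ E)) :=
    stdGaussian_real_compl_lt_setLIntegral_cosh_le hε hε1 hτ hτ1 hτε
      (div_one_sub_sq_sq_mul_le hη hηc) hk
      (hpk.trans_le ((mul_le_mul_of_nonneg_left hB hε1').trans hB'))
  have hA' : (1 - ε) * γ.real A ≤ γ.real (A ∩ S) :=
    one_sub_mul_measureReal_le_measureReal_inter (by nlinarith)
  have hKm : Measurable fun x ↦ ∫⁻ y in B, K x y ∂γ :=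
    ((((continuous_mehlerKernel (-η)).const_mul _).add ((continuous_mehlerKernel η).const_mul
      _)).const_mul _).measurable.ennreal_ofReal.lintegral_prod_right'
  calc ENNReal.ofReal ((1 - ε) ^ 4 * γ.real A * γ.real B)
    _ ≤ ENNReal.ofReal ((1 - ε) ^ 2 * γ.real B' * γ.real (A ∩ S)) := by
        refine ENNReal.ofReal_le_ofReal ?_
        calc (1 - ε) ^ 4 * γ.real A * γ.real B
            = (1 - ε) ^ 2 * ((1 - ε) * γ.real B) * ((1 - ε) * γ.real A) := by ring
          _ ≤ _ := by gcongr
    _ = ∫⁻ _ in A ∩ S, ENNReal.ofReal ((1 - ε) ^ 2) * γ B' ∂γ := by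
        rw [setLIntegral_const, ENNReal.ofReal_mul (by positivity),
          ENNReal.ofReal_mul (by positivity), ofReal_measureReal, ofReal_measureReal]
    _ ≤ ∫⁻ x in A ∩ S, ∫⁻ y in B, K x y ∂γ ∂γ := setLIntegral_mono hKm fun x hx ↦
        (sq_mul_measure_le_setLIntegral_mehlerKernel hε1 hτ (by linarith) hη hηc
          Set.inter_subset_right hx.2.1 hx.2.2.le).trans (lintegral_mono_set Set.inter_subset_left)
    _ ≤ ∫⁻ x in A, ∫⁻ y in B, K x y ∂γ ∂γ := lintegral_mono_set Set.inter_subset_left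

end Mehler

lemma gaussianReal_map_eq_withDensity_mehlerKernel {η : ℝ} (hη : η ^ 2 < 1) (x : ℝ) :
    (gaussianReal 0 1).map (fun z ↦ η * x + √(1 - η ^ 2) * z)
      = (gaussianReal 0 1).withDensity fun y ↦ ENNReal.ofReal (mehlerKernel η x y) := by
  have hD : 0 < 1 - η ^ 2 := by linarith
  rw [gaussianReal_map_const_add_const_mul, gaussianReal_of_var_ne_zero _ (by
      rw [Ne, ← NNReal.coe_eq_zero, NNReal.coe_mk, Real.sq_sqrt hD.le]; exact hD.ne'),
    gaussianReal_of_var_ne_zero _ one_ne_zero, ← withDensity_mul _ (measurable_gaussianPDF 0 1)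
      (by unfold mehlerKernel; fun_prop)]
  congr 1
  ext y
  simp only [Pi.mul_apply, gaussianPDF]
  rw [← ENNReal.ofReal_mul (gaussianPDFReal_nonneg _ _ _)]
  congr 1
  simp only [gaussianPDFReal, mehlerKernel, Module.finrank_self, pow_one, NNReal.coe_mk,
    Real.sq_sqrt hD.le, NNReal.coe_one, mul_one, sub_zero, RCLike.inner_apply, conj_trivial,
    Real.norm_eq_abs, sq_abs]
  rw [Real.sqrt_mul (by positivity), mul_inv, mul_mul_mul_comm, ← Real.exp_add]
  congr 2
  field_simp
  ring

instance (N : ℕ) : IsProbabilityMeasure (stdGaussianPi N) := by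
  unfold stdGaussianPi
  infer_instance

instance (N : ℕ) (η : ℝ) : IsFiniteMeasure (Xi N η) := by
  unfold Xi
  infer_instance

lemma stdGaussianPi_map_eq_withDensity_mehlerKernel {N : ℕ} {η : ℝ} (hη : η ^ 2 < 1)
    (x : Fin N → ℝ) :
    (stdGaussianPi N).map (fun z ↦ η • x + √(1 - η ^ 2) • z)
      = (stdGaussianPi N).withDensity fun y ↦
          ENNReal.ofReal (mehlerKernel η (WithLp.toLp 2 x) (WithLp.toLp 2 y)) := by
  have hprob (i : Fin N) : IsProbabilityMeasure
      ((gaussianReal 0 1).map fun z ↦ η * x i + √(1 - η ^ 2) * z) :=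
    Measure.isProbabilityMeasure_map (by fun_prop)
  calc (stdGaussianPi N).map (fun z ↦ η • x + √(1 - η ^ 2) • z)
    _ = Measure.pi fun i ↦ (gaussianReal 0 1).map fun z ↦ η * x i + √(1 - η ^ 2) * z :=
        Measure.pi_map_pi (f := fun i z ↦ η * x i + √(1 - η ^ 2) * z) fun i ↦ by fun_prop
    _ = (stdGaussianPi N).withDensity fun y ↦
          ∏ i, ENNReal.ofReal (mehlerKernel η (x i) (y i)) := by
        simp_rw [gaussianReal_map_eq_withDensity_mehlerKernel hη] at hprob ⊢
        exact pi_withDensity_eq_withDensity_prod _ fun i ↦ by unfold mehlerKernel; fun_prop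
    _ = _ := by
        congr with y
        rw [← prod_mehlerKernel, ENNReal.ofReal_prod_of_nonneg fun i _ ↦ mehlerKernel_nonneg _ _ _]

lemma Xi_eq_withDensity_mehlerKernel {N : ℕ} {η : ℝ} (hη : η ^ 2 < 1) :
    Xi N η = ((stdGaussianPi N).prod (stdGaussianPi N)).withDensity fun p ↦
      ENNReal.ofReal (mehlerKernel η (WithLp.toLp 2 p.1) (WithLp.toLp 2 p.2)) := by
  have hk : Measurable fun p : (Fin N → ℝ) × (Fin N → ℝ) ↦
      ENNReal.ofReal (mehlerKernel η (WithLp.toLp 2 p.1) (WithLp.toLp 2 p.2)) := by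
    unfold mehlerKernel
    fun_prop
  have hg : Measurable fun p : (Fin N → ℝ) × (Fin N → ℝ) ↦ η • p.1 + √(1 - η ^ 2) • p.2 := by
    fun_prop
  exact map_prodMk_eq_withDensity (g := fun x z : Fin N → ℝ ↦ η • x + √(1 - η ^ 2) • z) hg
    (k := fun x y ↦ ENNReal.ofReal (mehlerKernel η (WithLp.toLp 2 x) (WithLp.toLp 2 y))) hk
    (stdGaussianPi_map_eq_withDensity_mehlerKernel hη)

lemma measurePreserving_toLp_stdGaussianPi (N : ℕ) :
    MeasurePreserving (MeasurableEquiv.toLp 2 (Fin N → ℝ)) (stdGaussianPi N)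
      (stdGaussian (EuclideanSpace ℝ (Fin N))) :=
  ⟨MeasurableEquiv.measurable _, map_pi_eq_stdGaussian⟩

lemma setLIntegral_stdGaussianPi_toLp {N : ℕ} (f : EuclideanSpace ℝ (Fin N) → ℝ≥0∞)
    (A : Set (Fin N → ℝ)) :
    ∫⁻ x in A, f (WithLp.toLp 2 x) ∂stdGaussianPi N
      = ∫⁻ x in WithLp.ofLp ⁻¹' A, f x ∂stdGaussian (EuclideanSpace ℝ (Fin N)) :=
  (measurePreserving_toLp_stdGaussianPi N).setLIntegral_comp_preimage_emb
    (MeasurableEquiv.measurableEmbedding _) f (WithLp.ofLp ⁻¹' A)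

lemma stdGaussian_real_preimage_ofLp {N : ℕ} (A : Set (Fin N → ℝ)) :
    (stdGaussian (EuclideanSpace ℝ (Fin N))).real (WithLp.ofLp ⁻¹' A)
      = (stdGaussianPi N A).toReal :=
  congrArg ENNReal.toReal ((measurePreserving_toLp_stdGaussianPi N).measure_preimage_emb
    (MeasurableEquiv.measurableEmbedding _) (WithLp.ofLp ⁻¹' A)).symm

lemma Xi_prod_eq_setLIntegral_mehlerKernel {N : ℕ} {η : ℝ} (hη : η ^ 2 < 1)
    (A B : Set (Fin N → ℝ)) :
    Xi N η (A ×ˢ B) = ∫⁻ x in WithLp.ofLp ⁻¹' A, ∫⁻ y in WithLp.ofLp ⁻¹' B,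
      ENNReal.ofReal (mehlerKernel η x y) ∂stdGaussian (EuclideanSpace ℝ (Fin N))
        ∂stdGaussian (EuclideanSpace ℝ (Fin N)) := by
  rw [Xi_eq_withDensity_mehlerKernel hη, withDensity_apply', setLIntegral_prod _
    (by unfold mehlerKernel; fun_prop), ← setLIntegral_stdGaussianPi_toLp]
  simp_rw [← setLIntegral_stdGaussianPi_toLp]

lemma ofReal_half_mul_Xi_prod_eq_setLIntegral {N : ℕ} {η : ℝ} (hη : η ^ 2 < 1) (s : ℝ)
    (A B : Set (Fin N → ℝ)) :
    ENNReal.ofReal (1 / 2 * (Real.exp s * (Xi N (-η) (A ×ˢ B)).toReal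
        + Real.exp (-s) * (Xi N η (A ×ˢ B)).toReal))
      = ∫⁻ x in WithLp.ofLp ⁻¹' A, ∫⁻ y in WithLp.ofLp ⁻¹' B, ENNReal.ofReal (1 / 2 *
          (Real.exp s * mehlerKernel (-η) x y + Real.exp (-s) * mehlerKernel η x y))
          ∂stdGaussian (EuclideanSpace ℝ (Fin N)) ∂stdGaussian (EuclideanSpace ℝ (Fin N)) := by
  have hη' : (-η) ^ 2 < 1 := by rwa [neg_sq]
  have hm (ζ : ℝ) (x : EuclideanSpace ℝ (Fin N)) :
      Measurable fun y ↦ ENNReal.ofReal (mehlerKernel ζ x y) := by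
    unfold mehlerKernel
    fun_prop
  have hm' (ζ : ℝ) : Measurable fun x : EuclideanSpace ℝ (Fin N) ↦
      ∫⁻ y in WithLp.ofLp ⁻¹' B, ENNReal.ofReal (mehlerKernel ζ x y) ∂stdGaussian _ :=
    (continuous_mehlerKernel ζ).measurable.ennreal_ofReal.lintegral_prod_right'
  have hs := (Real.exp_pos s).le
  have hs' := (Real.exp_pos (-s)).le
  calc ENNReal.ofReal (1 / 2 * (Real.exp s * (Xi N (-η) (A ×ˢ B)).toReal
        + Real.exp (-s) * (Xi N η (A ×ˢ B)).toReal))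
    _ = ENNReal.ofReal (1 / 2) * (ENNReal.ofReal (Real.exp s) * Xi N (-η) (A ×ˢ B)
          + ENNReal.ofReal (Real.exp (-s)) * Xi N η (A ×ˢ B)) := by
        rw [ENNReal.ofReal_mul one_half_pos.le, ENNReal.ofReal_add (by positivity) (by positivity),
          ENNReal.ofReal_mul hs, ENNReal.ofReal_mul hs', ENNReal.ofReal_toReal (measure_ne_top _ _),
          ENNReal.ofReal_toReal (measure_ne_top _ _)]
    _ = ∫⁻ x in WithLp.ofLp ⁻¹' A, ∫⁻ y in WithLp.ofLp ⁻¹' B, ENNReal.ofReal (1 / 2)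
          * (ENNReal.ofReal (Real.exp s) * ENNReal.ofReal (mehlerKernel (-η) x y)
            + ENNReal.ofReal (Real.exp (-s)) * ENNReal.ofReal (mehlerKernel η x y))
          ∂stdGaussian (EuclideanSpace ℝ (Fin N)) ∂stdGaussian (EuclideanSpace ℝ (Fin N)) := by
        simp_rw [lintegral_const_mul' _ _ ENNReal.ofReal_ne_top,
          lintegral_add_left ((hm _ _).const_mul _), lintegral_const_mul' _ _ ENNReal.ofReal_ne_top,
          lintegral_add_left ((hm' _).const_mul _), lintegral_const_mul' _ _ ENNReal.ofReal_ne_top,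
          Xi_prod_eq_setLIntegral_mehlerKernel hη, Xi_prod_eq_setLIntegral_mehlerKernel hη']
    _ = _ := by
        congr! with x y
        have hK := mehlerKernel_nonneg (-η) x y
        have hK' := mehlerKernel_nonneg η x y
        rw [ENNReal.ofReal_mul one_half_pos.le, ENNReal.ofReal_add (by positivity) (by positivity),
          ENNReal.ofReal_mul hs, ENNReal.ofReal_mul hs']

theorem one_sub_pow_four_mul_le_half_mul_Xi_prod {N : ℕ} {c ε η τ p s : ℝ} (hε : 0 ≤ ε)
    (hε1 : ε ≤ 1) (hτ : 0 ≤ τ) (hτ1 : τ ≤ 1) (hτε : τ * (2 * c) ^ 2 ≤ ε / 2) (hη : η ^ 2 ≤ 1 / 2)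
    (hηc : η ^ 2 * N ≤ c ^ 2) {k : ℕ} (hk : k ≤ τ * N / 4) {A B : Set (Fin N → ℝ)}
    (hA : p ≤ (stdGaussianPi N A).toReal) (hB : p ≤ (stdGaussianPi N B).toReal)
    (hpτ : 3 * Real.exp (-(τ ^ 2 / 16 * N)) ≤ ε * p)
    (hpk : Real.exp (-(k * (ε ^ 2 / (8 * Real.exp (4 * (2 * c) ^ 2))))) < (1 - ε) * p) :
    (1 - ε) ^ 4 * (stdGaussianPi N A).toReal * (stdGaussianPi N B).toReal
      ≤ 1 / 2 * (Real.exp s * (Xi N (-η) (A ×ˢ B)).toReal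
        + Real.exp (-s) * (Xi N η (A ×ˢ B)).toReal) := by
  rw [← ENNReal.ofReal_le_ofReal_iff (by positivity),
    ofReal_half_mul_Xi_prod_eq_setLIntegral (by linarith), ← stdGaussian_real_preimage_ofLp A,
    ← stdGaussian_real_preimage_ofLp B]
  rw [← stdGaussian_real_preimage_ofLp] at hA hB
  rw [← finrank_euclideanSpace_fin (𝕜 := ℝ) (n := N)] at hηc hk hpτ
  exact one_sub_pow_four_mul_le_setLIntegral_mehlerKernel hε hε1 hτ hτ1 hτε hη hηc hk hA hB hpτ hpk

lemma exists_pos_eventually_exp_neg_lt_mul_two_rpow {α ε τ : ℝ} (hα : 0 < α) (hε : 0 < ε)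
    (hε1 : ε < 1) (hτ : 0 < τ) :
    ∃ δ > 0, ∀ᶠ N : ℕ in Filter.atTop,
      3 * Real.exp (-(τ ^ 2 / 16 * N)) < ε * 2 ^ (-δ * (N : ℝ)) ∧
        Real.exp (-(⌊τ * N / 4⌋₊ * α)) < (1 - ε) * 2 ^ (-δ * (N : ℝ)) := by
  obtain ⟨δ, hδ, hδτ⟩ := exists_between (lt_min (by positivity : 0 < τ ^ 2 / 16)
    (by positivity : 0 < τ / 4 * α))
  rw [lt_min_iff] at hδτ
  have hlog : δ * Real.log 2 ≤ δ := mul_le_of_le_one_right hδ.le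
    (by linarith [Real.log_two_lt_d9])
  refine ⟨δ, hδ, (eventually_mul_exp_neg_lt_mul_two_rpow (hlog.trans_lt hδτ.1) hε 3).and ?_⟩
  filter_upwards [eventually_mul_exp_neg_lt_mul_two_rpow (hlog.trans_lt hδτ.2) (sub_pos.2 hε1)
    (Real.exp α)] with N hN
  refine lt_of_le_of_lt ?_ hN
  rw [← Real.exp_add, Real.exp_le_exp]
  nlinarith [Nat.lt_floor_add_one (τ * N / 4)]

theorem stmt0_general (c : ℝ) {ε : ℝ} (hε : 0 < ε) :
    ∃ δ > (0 : ℝ), ∃ N₀ : ℕ, ∀ N ≥ N₀, ∀ η : ℝ, |η| ≤ c / √N → ∀ A B : Set (Fin N → ℝ),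
      (2 : ℝ) ^ (-δ * (N : ℝ)) ≤ (stdGaussianPi N A).toReal →
      (2 : ℝ) ^ (-δ * (N : ℝ)) ≤ (stdGaussianPi N B).toReal →
      ∀ s : ℝ, (1 - ε) * (stdGaussianPi N A).toReal * (stdGaussianPi N B).toReal
        ≤ 1 / 2 * (Real.exp s * (Xi N (-η) (A ×ˢ B)).toReal
          + Real.exp (-s) * (Xi N η (A ×ˢ B)).toReal) := by
  obtain ⟨e, he, heε⟩ := exists_between (lt_min one_half_pos (by positivity : 0 < ε / 4))
  obtain ⟨he1, heε⟩ := lt_min_iff.1 heε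
  obtain ⟨τ, hτ, hτe⟩ := exists_between
    (lt_min one_pos (by positivity : 0 < e / (8 * (c ^ 2 + 1))))
  obtain ⟨hτ1, hτe⟩ := lt_min_iff.1 hτe
  rw [lt_div_iff₀ (by positivity)] at hτe
  obtain ⟨δ, hδ, hsmall⟩ := exists_pos_eventually_exp_neg_lt_mul_two_rpow
    (by positivity : 0 < e ^ 2 / (8 * Real.exp (4 * (2 * c) ^ 2))) he (by linarith) hτ
  obtain ⟨N₀, hN₀⟩ := Filter.eventually_atTop.1 (hsmall.and
    ((Filter.eventually_gt_atTop 0).and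
      (tendsto_natCast_atTop_atTop.eventually_ge_atTop (2 * c ^ 2))))
  refine ⟨δ, hδ, N₀, fun N hN η hη A B hA hB s ↦ ?_⟩
  obtain ⟨⟨hpτ, hpk⟩, hN0, hNc⟩ := hN₀ N hN
  have hN0' : (0 : ℝ) < N := Nat.cast_pos.2 hN0
  have hηc := sq_mul_le_sq_of_abs_le_div_sqrt hN0' hη
  have hη2 : η ^ 2 ≤ 1 / 2 := le_of_mul_le_mul_right (by linarith) hN0'
  have hbernoulli : 1 - ε ≤ (1 - e) ^ 4 := by
    have := one_add_mul_le_pow (by linarith : -2 ≤ -e) 4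
    rw [← sub_eq_add_neg] at this
    push_cast at this
    linarith
  calc (1 - ε) * (stdGaussianPi N A).toReal * (stdGaussianPi N B).toReal
    _ ≤ (1 - e) ^ 4 * (stdGaussianPi N A).toReal * (stdGaussianPi N B).toReal := by gcongr
    _ ≤ _ := one_sub_pow_four_mul_le_half_mul_Xi_prod he.le (by linarith) hτ.le hτ1.le
        (by linarith) hη2 hηc (Nat.floor_le (by positivity)) hA hB hpτ.le hpk

theorem stmt0 :
    ∀ c > (0 : ℝ), ∀ ε > (0 : ℝ), ∃ δ > (0 : ℝ), ∃ N₀ : ℕ, ∀ N ≥ N₀,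
      ∀ η : ℝ, 0 ≤ η → η ≤ c / Real.sqrt N →
        ∀ A B : Set (Fin N → ℝ), MeasurableSet A → MeasurableSet B →
          (stdGaussianPi N A).toReal ≥ (2 : ℝ) ^ (-δ * (N : ℝ)) →
          (stdGaussianPi N B).toReal ≥ (2 : ℝ) ^ (-δ * (N : ℝ)) →
          ∀ s : ℝ,
            (1 / 2) * (Real.exp s * (Xi N (-η) (A ×ˢ B)).toReal
                + Real.exp (-s) * (Xi N η (A ×ˢ B)).toReal)
              ≥ (1 - ε) * (stdGaussianPi N A).toReal * (stdGaussianPi N B).toReal := by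
  intro c _ ε hε
  obtain ⟨δ, hδ, N₀, h⟩ := stmt0_general c hε
  exact ⟨δ, hδ, N₀, fun N hN η hη hηc A B _ _ ↦ h N hN η (by rwa [abs_of_nonneg hη]) A B⟩
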